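/- Let h(z) = ∑_{n≥0} aₙ zⁿ be an entire function. Then there exists a separable complex Hilbert space H, a compact quasinilpotent operator A on H, and vectors b, c ∈ H such that ⟪b, Aⁿ c⟫ = aₙ for all n ≥ 0. -/

import Mathlib

/-!
Let `A` be a weighted shift `A eₙ = wₙ eₙ₊₁` along an orthonormal sequence, so that
`Aⁿ e₀ = (w₀ ⋯ wₙ₋₁) eₙ`, and take `c = e₀`. Then `⟪b, Aⁿ c⟫ = aₙ` forces `b` to have the
coefficients `conj (aₙ / (w₀ ⋯ wₙ₋₁))` along `e`, which must be square summable. The sequence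
`2 |aₙ| ^ (1 / n)` tends to zero because `∑ aₙ zⁿ` is entire, so it has a positive majorant `wₙ`
that decreases to zero. Then `w₀ ⋯ wₙ₋₁ ≥ wₙⁿ ≥ 2ⁿ |aₙ|`, so these coefficients decay
geometrically.

Since `wₙ → 0`, the operator `A` is a norm limit of finite rank operators, hence compact, and by the
Fredholm alternative it is quasinilpotent as soon as it has no nonzero eigenvalue. If `A x = μ x`,
then `μ ⟪e₀, x⟫ = 0` and `μ ⟪eₙ₊₁, x⟫ = wₙ ⟪eₙ, x⟫`, so for `μ ≠ 0` all coefficients of `x` vanish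
and `μ x = A x = 0`.
-/

open Filter Finset Topology
open scoped ComplexConjugate ENNReal InnerProductSpace lp

section Sequences

theorem exists_antitone_tendsto_zero_forall_le {u : ℕ → ℝ} (hu : Tendsto u atTop (𝓝 0)) :
    ∃ w : ℕ → ℝ, Antitone w ∧ Tendsto w atTop (𝓝 0) ∧ ∀ n, u n ≤ w n := by
  have tail_bdd (n : ℕ) : BddAbove (Set.range fun k ↦ u (n + k)) :=
    hu.bddAbove_range.mono (Set.range_comp_subset_range (n + ·) u)
  have le_tail (n : ℕ) : u n ≤ ⨆ k, u (n + k) := le_ciSup (tail_bdd n) 0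
  refine ⟨fun n ↦ ⨆ k, u (n + k), antitone_nat_of_succ_le fun n ↦ ciSup_le fun k ↦ ?_, ?_, le_tail⟩
  · simpa only [add_assoc] using le_ciSup (tail_bdd n) (1 + k)
  · refine tendsto_order.2 ⟨fun ε hε ↦ ?_, fun ε hε ↦ ?_⟩
    · filter_upwards [hu.eventually_const_lt hε] with n hn using hn.trans_le (le_tail n)
    · obtain ⟨N, hN⟩ := eventually_atTop.1 (hu.eventually_le_const (half_pos hε))
      filter_upwards [eventually_ge_atTop N] with n hn
      have tail_le : ⨆ k, u (n + k) ≤ ε / 2 := ciSup_le fun k ↦ hN _ (by lia)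
      linarith

theorem tendsto_norm_rpow_inv_of_forall_tendsto_mul_pow {𝕜 : Type*} [NontriviallyNormedField 𝕜]
    {a : ℕ → 𝕜} (ha : ∀ z : 𝕜, Tendsto (fun n ↦ a n * z ^ n) atTop (𝓝 0)) :
    Tendsto (fun n : ℕ ↦ ‖a n‖ ^ (n : ℝ)⁻¹) atTop (𝓝 0) := by
  refine tendsto_order.2 ⟨fun ε hε ↦ .of_forall fun n ↦ hε.trans_le (by positivity), fun ε hε ↦ ?_⟩
  obtain ⟨z, hz⟩ := NormedField.exists_lt_norm 𝕜 ε⁻¹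
  have hz_pos : 0 < ‖z‖ := (inv_pos.2 hε).trans hz
  filter_upwards [(ha z).norm.eventually_le_const (by simp : ‖(0 : 𝕜)‖ < 1),
    eventually_ne_atTop 0] with n hn hn0
  have coeff_le : ‖a n‖ ≤ ‖z‖⁻¹ ^ n := by
    rwa [norm_mul, norm_pow, ← le_div_iff₀ (by positivity), one_div, ← inv_pow] at hn
  calc ‖a n‖ ^ (n : ℝ)⁻¹ ≤ (‖z‖⁻¹ ^ n) ^ (n : ℝ)⁻¹ := by gcongr
    _ = ‖z‖⁻¹ := Real.pow_rpow_inv_natCast (by positivity) hn0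
    _ < ε := inv_lt_of_inv_lt₀ hε hz

theorem exists_antitone_pos_forall_norm_le_pow {𝕜 : Type*} [NontriviallyNormedField 𝕜]
    {a : ℕ → 𝕜} (ha : ∀ z : 𝕜, Tendsto (fun n ↦ a n * z ^ n) atTop (𝓝 0)) :
    ∃ w : ℕ → ℝ, Antitone w ∧ Tendsto w atTop (𝓝 0) ∧ (∀ n, 0 < w n) ∧
      ∀ n ≠ 0, ‖a n‖ ≤ w n ^ n := by
  have hu : Tendsto (fun n : ℕ ↦ ‖a n‖ ^ (n : ℝ)⁻¹ + 1 / ((n : ℝ) + 1)) atTop (𝓝 0) := by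
    simpa only [add_zero] using
      (tendsto_norm_rpow_inv_of_forall_tendsto_mul_pow ha).add
        tendsto_one_div_add_atTop_nhds_zero_nat
  obtain ⟨w, hw_anti, hw_lim, hw_ge⟩ := exists_antitone_tendsto_zero_forall_le hu
  refine ⟨w, hw_anti, hw_lim, fun n ↦ lt_of_lt_of_le (by positivity) (hw_ge n), fun n hn ↦ ?_⟩
  have root_le : ‖a n‖ ^ (n : ℝ)⁻¹ ≤ w n :=
    (le_add_of_nonneg_right (by positivity)).trans (hw_ge n)
  calc ‖a n‖ = (‖a n‖ ^ (n : ℝ)⁻¹) ^ n := (Real.rpow_inv_natCast_pow (norm_nonneg _) hn).symm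
    _ ≤ w n ^ n := by gcongr

theorem pow_le_prod_range_of_antitone {R : Type*} [CommMonoidWithZero R] [PartialOrder R]
    [ZeroLEOneClass R] [PosMulMono R] {w : ℕ → R} (hw : Antitone w) (hw_nonneg : ∀ n, 0 ≤ w n)
    (n : ℕ) : w n ^ n ≤ ∏ i ∈ range n, w i := by
  simpa only [prod_const, card_range] using prod_le_prod (s := range n) (fun _ _ ↦ hw_nonneg n)
    fun i hi ↦ hw (mem_range.1 hi).le

theorem exists_pos_tendsto_zero_summable_norm_div_prod {𝕜 : Type*} [RCLike 𝕜]
    {a : ℕ → 𝕜} (ha : ∀ z : 𝕜, Tendsto (fun n ↦ a n * z ^ n) atTop (𝓝 0)) :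
    ∃ w : ℕ → ℝ, (∀ n, 0 < w n) ∧ Tendsto w atTop (𝓝 0) ∧
      Summable fun n ↦ ‖a n‖ / ∏ i ∈ range n, w i := by
  have ha_two (z : 𝕜) : Tendsto (fun n ↦ a n * 2 ^ n * z ^ n) atTop (𝓝 0) := by
    simpa only [mul_assoc, mul_pow] using ha (2 * z)
  obtain ⟨w, hw_anti, hw_lim, hw_pos, hw_pow⟩ := exists_antitone_pos_forall_norm_le_pow ha_two
  refine ⟨w, hw_pos, hw_lim, .of_norm_bounded_eventually_nat summable_geometric_two ?_⟩
  filter_upwards [eventually_ne_atTop 0] with n hn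
  have prod_pos : 0 < ∏ i ∈ range n, w i := prod_pos fun i _ ↦ hw_pos i
  have le_prod : ‖a n‖ * 2 ^ n ≤ ∏ i ∈ range n, w i := by
    simpa only [norm_mul, norm_pow, RCLike.norm_two] using
      (hw_pow n hn).trans (pow_le_prod_range_of_antitone hw_anti (fun i ↦ (hw_pos i).le) n)
  rw [Real.norm_of_nonneg (by positivity), div_le_iff₀ prod_pos, one_div, inv_pow,
    inv_mul_eq_div, le_div_iff₀ (by positivity)]
  exact le_prod

end Sequences

section CompactOperators

theorem spectralRadius_eq_zero_of_isCompactOperator {𝕜 X : Type*} [NontriviallyNormedField 𝕜]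
    [NormedAddCommGroup X] [NormedSpace 𝕜 X] [CompleteSpace X] {T : X →L[𝕜] X}
    (hT : IsCompactOperator T) (h : ∀ μ : 𝕜, μ ≠ 0 → ∀ x, T x = μ • x → x = 0) :
    spectralRadius 𝕜 T = 0 := by
  simp only [spectralRadius, ENNReal.iSup_eq_zero]
  intro μ hμ
  by_contra hμ_norm
  have hμ_ne : μ ≠ 0 := by simpa using hμ_norm
  obtain ⟨x, hx⟩ := ((hT.hasEigenvalue_iff_mem_spectrum hμ_ne).2 hμ).exists_hasEigenvector
  exact hx.2 (h μ hμ_ne x hx.apply_eq_smul)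

theorem hasSum_lp_single_of_tendsto_cofinite {ι : Type*} [DecidableEq ι] {E : ι → Type*}
    [∀ i, NormedAddCommGroup (E i)] {x : lp E ∞}
    (hx : Tendsto (fun i ↦ ‖x i‖) cofinite (𝓝 0)) :
    HasSum (fun i ↦ lp.single ∞ i (x i)) x := by
  refine Metric.tendsto_nhds.2 fun ε hε ↦ ?_
  have large_finite : {i | ¬ ‖x i‖ < ε / 2}.Finite := hx.eventually_lt_const (half_pos hε)
  filter_upwards [eventually_ge_atTop large_finite.toFinset] with s hs
  suffices ‖∑ i ∈ s, lp.single ∞ i (x i) - x‖ ≤ ε / 2 by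
    rw [dist_eq_norm]; linarith
  refine lp.norm_le_of_forall_le (half_pos hε).le fun i ↦ ?_
  have apply_eq : (∑ j ∈ s, lp.single ∞ j (x j) - x) i = if i ∈ s then 0 else -x i := by
    rw [lp.coeFn_sub, Pi.sub_apply, lp.coeFn_sum, Finset.sum_apply]
    simp only [lp.single_apply, Finset.sum_pi_single]
    split_ifs <;> simp
  rw [apply_eq]
  split_ifs with hi
  · simpa only [norm_zero] using (half_pos hε).le
  · rw [norm_neg]
    by_contra! hlarge
    exact hi (hs (large_finite.mem_toFinset.2 hlarge.not_gt))

theorem isCompactOperator_smulRight {𝕜 X Y : Type*} [NontriviallyNormedField 𝕜]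
    [LocallyCompactSpace 𝕜] [AddCommGroup X] [Module 𝕜 X] [TopologicalSpace X]
    [AddCommGroup Y] [Module 𝕜 Y] [TopologicalSpace Y] [ContinuousSMul 𝕜 Y]
    (φ : X →L[𝕜] 𝕜) (y : Y) : IsCompactOperator (φ.smulRight y) :=
  (isCompactOperator_of_locallyCompactSpace_rng
    (ContinuousLinearMap.toSpanSingleton 𝕜 y)).comp_clm φ

end CompactOperators

section Orthonormal

variable {ι 𝕜 E F : Type*} [RCLike 𝕜]
  [NormedAddCommGroup E] [InnerProductSpace 𝕜 E] [CompleteSpace E]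
  [NormedAddCommGroup F] [InnerProductSpace 𝕜 F] [CompleteSpace F]
  {e : ι → E} {f : ι → F}

/-- The synthesis operator `(xᵢ) ↦ ∑ xᵢ eᵢ` of an orthonormal family. Together with its adjoint, the
analysis operator `x ↦ (⟪eᵢ, x⟫)`, it transports diagonal operators on `ℓ²` to Hilbert spaces. -/
noncomputable def synthesis (he : Orthonormal 𝕜 e) : ℓ^2(ι, 𝕜) →ₗᵢ[𝕜] E :=
  he.orthogonalFamily.linearIsometry

theorem hasSum_synthesis (he : Orthonormal 𝕜 e) (x : ℓ^2(ι, 𝕜)) :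
    HasSum (fun i ↦ x i • e i) (synthesis he x) :=
  he.orthogonalFamily.hasSum_linearIsometry x

theorem synthesis_single [DecidableEq ι] (he : Orthonormal 𝕜 e) (i : ι) (c : 𝕜) :
    synthesis he (lp.single 2 i c) = c • e i :=
  he.orthogonalFamily.linearIsometry_apply_single c

theorem inner_synthesis (he : Orthonormal 𝕜 e) (i : ι) (x : ℓ^2(ι, 𝕜)) :
    ⟪e i, synthesis he x⟫_𝕜 = x i := by
  classical
  rw [← one_smul 𝕜 (e i), ← synthesis_single he, LinearIsometry.inner_map_map,
    lp.inner_single_left, RCLike.inner_apply, map_one, mul_one]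

theorem adjoint_synthesis_apply (he : Orthonormal 𝕜 e) (x : E) (i : ι) :
    (synthesis he).toContinuousLinearMap.adjoint x i = ⟪e i, x⟫_𝕜 := by
  classical
  calc (synthesis he).toContinuousLinearMap.adjoint x i
      = ⟪lp.single 2 i (1 : 𝕜), (synthesis he).toContinuousLinearMap.adjoint x⟫_𝕜 := by
        rw [lp.inner_single_left, RCLike.inner_apply, map_one, mul_one]
    _ = ⟪e i, x⟫_𝕜 := by
        rw [ContinuousLinearMap.adjoint_inner_right, LinearIsometry.coe_toContinuousLinearMap,
          synthesis_single, one_smul]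

/-- The operator `x ↦ ∑ wᵢ ⟪eᵢ, x⟫ fᵢ` with bounded coefficients `w`, the form that the Schmidt
decomposition gives to a compact operator. It is bundled as a continuous linear function of `w`, so
that expansions of `w` in `ℓ^∞` become expansions in operator norm. -/
noncomputable def schmidtOperator (he : Orthonormal 𝕜 e) (hf : Orthonormal 𝕜 f) :
    ℓ^∞(ι, 𝕜) →L[𝕜] E →L[𝕜] F :=
  ((synthesis hf).postcomp : (E →L[𝕜] ℓ^2(ι, 𝕜)) →ₗᵢ[𝕜] E →L[𝕜] F).toContinuousLinearMap ∘L
    (synthesis he).toContinuousLinearMap.adjoint.precomp ℓ^2(ι, 𝕜) ∘L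
      lp.holderL 2 (fun _ ↦ ContinuousLinearMap.mul 𝕜 𝕜) (K := 1) (by simp)

theorem hasSum_schmidtOperator (he : Orthonormal 𝕜 e) (hf : Orthonormal 𝕜 f) (w : ℓ^∞(ι, 𝕜))
    (x : E) :
    HasSum (fun i ↦ (w i * ⟪e i, x⟫_𝕜) • f i) (schmidtOperator he hf w x) := by
  simp_rw [← adjoint_synthesis_apply he]
  exact hasSum_synthesis hf _

theorem schmidtOperator_apply_self (he : Orthonormal 𝕜 e) (hf : Orthonormal 𝕜 f) (w : ℓ^∞(ι, 𝕜))
    (i : ι) : schmidtOperator he hf w (e i) = w i • f i := by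
  classical
  refine (hasSum_schmidtOperator he hf w (e i)).unique ?_
  convert hasSum_ite_eq i (w i • f i) using 2 with j
  rw [orthonormal_iff_ite.1 he]
  split_ifs with hji
  · rw [hji, mul_one]
  · rw [mul_zero, zero_smul]

theorem inner_schmidtOperator (he : Orthonormal 𝕜 e) (hf : Orthonormal 𝕜 f) (w : ℓ^∞(ι, 𝕜))
    (x : E) (i : ι) : ⟪f i, schmidtOperator he hf w x⟫_𝕜 = w i * ⟪e i, x⟫_𝕜 := by
  classical
  refine ((hasSum_schmidtOperator he hf w x).mapL (innerSL 𝕜 (f i))).unique ?_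
  convert hasSum_ite_eq i (w i * ⟪e i, x⟫_𝕜) using 2 with j
  rw [innerSL_apply_apply, inner_smul_right, orthonormal_iff_ite.1 hf]
  simp only [eq_comm (a := i), mul_ite, mul_one, mul_zero]
  split_ifs with hji
  · rw [hji]
  · rfl

theorem inner_schmidtOperator_eq_zero (he : Orthonormal 𝕜 e) (hf : Orthonormal 𝕜 f)
    (w : ℓ^∞(ι, 𝕜)) {v : F} (hv : ∀ i, ⟪v, f i⟫_𝕜 = 0) (x : E) :
    ⟪v, schmidtOperator he hf w x⟫_𝕜 = 0 := by
  refine ((hasSum_schmidtOperator he hf w x).mapL (innerSL 𝕜 v)).unique ?_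
  simpa only [innerSL_apply_apply, inner_smul_right, hv, mul_zero] using hasSum_zero

theorem schmidtOperator_single [DecidableEq ι] (he : Orthonormal 𝕜 e) (hf : Orthonormal 𝕜 f)
    (i : ι) (c : 𝕜) :
    schmidtOperator he hf (lp.single ∞ i c) = (innerSL 𝕜 (e i)).smulRight (c • f i) := by
  ext x
  refine (hasSum_schmidtOperator he hf _ x).unique ?_
  rw [ContinuousLinearMap.smulRight_apply, innerSL_apply_apply]
  convert hasSum_ite_eq i (⟪e i, x⟫_𝕜 • c • f i) using 2 with j
  split_ifs with hji
  · rw [hji, lp.single_apply_self, smul_smul, mul_comm]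
  · simp only [lp.single_apply, Pi.single_eq_of_ne hji, zero_mul, zero_smul]

theorem isCompactOperator_schmidtOperator (he : Orthonormal 𝕜 e) (hf : Orthonormal 𝕜 f)
    {w : ℓ^∞(ι, 𝕜)} (hw : Tendsto (fun i ↦ ‖w i‖) cofinite (𝓝 0)) :
    IsCompactOperator (schmidtOperator he hf w) := by
  classical
  have expansion := (hasSum_lp_single_of_tendsto_cofinite hw).mapL (schmidtOperator he hf)
  refine isCompactOperator_of_tendsto expansion (.of_forall fun s ↦ ?_)
  refine (compactOperator (RingHom.id 𝕜) E F).sum_mem fun i _ ↦ ?_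
  rw [schmidtOperator_single]
  exact isCompactOperator_smulRight _ _

end Orthonormal

section WeightedShift

variable {𝕜 H : Type*} [RCLike 𝕜] [NormedAddCommGroup H] [InnerProductSpace 𝕜 H] [CompleteSpace H]
  {e : ℕ → H}

/-- The weighted unilateral shift `eₙ ↦ wₙ eₙ₊₁` along an orthonormal sequence `e`, extended by
zero to the orthogonal complement of `e`. It serves as the state operator of a realization. -/
noncomputable def weightedShift (he : Orthonormal 𝕜 e) (w : ℓ^∞(ℕ, 𝕜)) : H →L[𝕜] H :=
  schmidtOperator he (he.comp Nat.succ Nat.succ_injective) w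

theorem weightedShift_pow_apply_zero (he : Orthonormal 𝕜 e) (w : ℓ^∞(ℕ, 𝕜)) (n : ℕ) :
    (weightedShift he w ^ n) (e 0) = (∏ i ∈ range n, w i) • e n := by
  induction n with
  | zero => rw [pow_zero, prod_range_zero, one_smul, one_apply_eq_self]
  | succ n ih =>
    rw [pow_succ', mul_apply_eq_comp, ih, map_smul, weightedShift,
      schmidtOperator_apply_self, smul_smul, prod_range_succ, Function.comp_apply]

theorem eq_zero_of_weightedShift_apply_eq_smul (he : Orthonormal 𝕜 e) (w : ℓ^∞(ℕ, 𝕜)) {μ : 𝕜}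
    (hμ : μ ≠ 0) {x : H} (hx : weightedShift he w x = μ • x) : x = 0 := by
  have he_succ := he.comp Nat.succ Nat.succ_injective
  have coeff_eq_zero (n : ℕ) : ⟪e n, x⟫_𝕜 = 0 := by
    refine (mul_eq_zero.1 ?_).resolve_left hμ
    rw [← inner_smul_right, ← hx]
    induction n with
    | zero => exact inner_schmidtOperator_eq_zero he he_succ w (fun i ↦ he.2 i.succ_ne_zero.symm) x
    | succ n ih =>
      rw [hx, inner_smul_right, mul_eq_zero, or_iff_right hμ] at ih
      rw [weightedShift, ← Nat.succ_eq_add_one, ← Function.comp_apply (f := e),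
        inner_schmidtOperator, ih, mul_zero]
  have apply_eq_zero : weightedShift he w x = 0 := by
    refine (hasSum_schmidtOperator he he_succ w x).unique ?_
    simpa only [coeff_eq_zero, mul_zero, zero_smul] using hasSum_zero
  exact (smul_eq_zero.1 (hx.symm.trans apply_eq_zero)).resolve_left hμ

theorem isCompactOperator_weightedShift (he : Orthonormal 𝕜 e) {w : ℓ^∞(ℕ, 𝕜)}
    (hw : Tendsto (fun n ↦ ‖w n‖) atTop (𝓝 0)) : IsCompactOperator (weightedShift he w) :=
  isCompactOperator_schmidtOperator he _ (Nat.cofinite_eq_atTop ▸ hw)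

theorem spectralRadius_weightedShift (he : Orthonormal 𝕜 e) {w : ℓ^∞(ℕ, 𝕜)}
    (hw : Tendsto (fun n ↦ ‖w n‖) atTop (𝓝 0)) : spectralRadius 𝕜 (weightedShift he w) = 0 :=
  spectralRadius_eq_zero_of_isCompactOperator (isCompactOperator_weightedShift he hw)
    fun _ hμ _ ↦ eq_zero_of_weightedShift_apply_eq_smul he w hμ

theorem exists_inner_weightedShift_pow_eq (he : Orthonormal 𝕜 e) {w : ℓ^∞(ℕ, 𝕜)}
    (hw : ∀ n, w n ≠ 0) {a : ℕ → 𝕜} (ha : Memℓp (fun n ↦ a n / ∏ i ∈ range n, w i) 2) :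
    ∃ b : H, ∀ n, ⟪b, (weightedShift he w ^ n) (e 0)⟫_𝕜 = a n := by
  refine ⟨synthesis he ⟨fun n ↦ conj (a n / ∏ i ∈ range n, w i), ha.star_mem⟩, fun n ↦ ?_⟩
  have prod_ne_zero : ∏ i ∈ range n, w i ≠ 0 := prod_ne_zero_iff.2 fun i _ ↦ hw i
  rw [weightedShift_pow_apply_zero, inner_smul_right, ← inner_conj_symm, inner_synthesis,
    RCLike.conj_conj, mul_div_cancel₀ _ prod_ne_zero]

theorem stmt5_general (he : Orthonormal 𝕜 e) {a : ℕ → 𝕜}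
    (ha : ∀ z : 𝕜, Summable fun n ↦ ‖a n * z ^ n‖) :
    ∃ (A : H →L[𝕜] H) (b c : H), IsCompactOperator A ∧ spectralRadius 𝕜 A = 0 ∧
      ∀ n, ⟪b, (A ^ n) c⟫_𝕜 = a n := by
  obtain ⟨v, v_pos, v_lim, v_sum⟩ := exists_pos_tendsto_zero_summable_norm_div_prod
    fun z ↦ tendsto_zero_iff_norm_tendsto_zero.2 (ha z).tendsto_atTop_zero
  have norm_coe (n : ℕ) : ‖(v n : 𝕜)‖ = v n := RCLike.norm_of_nonneg (v_pos n).le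
  have norm_lim : Tendsto (fun n ↦ ‖(v n : 𝕜)‖) atTop (𝓝 0) := by simpa only [norm_coe] using v_lim
  let w : ℓ^∞(ℕ, 𝕜) := ⟨fun n ↦ (v n : 𝕜), memℓp_infty norm_lim.bddAbove_range⟩
  have quotient_mem : Memℓp (fun n ↦ a n / ∏ i ∈ range n, w i) 2 := by
    refine Memℓp.of_exponent_ge (q := 1) (memℓp_gen ?_) one_le_two
    simpa only [ENNReal.toReal_one, Real.rpow_one, norm_div, norm_prod, w, norm_coe] using v_sum
  obtain ⟨b, hb⟩ := exists_inner_weightedShift_pow_eq he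
    (fun n ↦ RCLike.ofReal_ne_zero.2 (v_pos n).ne') quotient_mem
  exact ⟨weightedShift he w, b, e 0, isCompactOperator_weightedShift he norm_lim,
    spectralRadius_weightedShift he norm_lim, hb⟩

end WeightedShift

/-- Any entire function `h(z) = ∑ aₙ zⁿ` has a realization `(A, b, c)` on a separable
complex Hilbert space (here the separable Hilbert space `ℓ²`), where `A` is a compact
quasinilpotent operator and `⟪b, Aⁿ c⟫ = aₙ` for all `n`. -/
theorem stmt5 (a : ℕ → ℂ) (ha : ∀ z : ℂ, Summable fun n : ℕ => ‖a n * z ^ n‖) :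
    ∃ (A : lp (fun _ : ℕ => ℂ) 2 →L[ℂ] lp (fun _ : ℕ => ℂ) 2)
      (b c : lp (fun _ : ℕ => ℂ) 2),
        IsCompactOperator (⇑A) ∧ spectralRadius ℂ A = 0 ∧
          ∀ n : ℕ, @inner ℂ (lp (fun _ : ℕ => ℂ) 2) _ b ((A ^ n) c) = a n :=
  stmt5_general (HilbertBasis.ofRepr (LinearIsometryEquiv.refl ℂ ℓ^2(ℕ, ℂ))).orthonormal ha
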